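/- Let a, b, c be pairwise distinct elements of ℂ ∖ {0,1}, and set u₁ = 1 + u + v, v₁ = a + b·u + c·v. Let A = ℂ[w,u,v,t₁,x]/(w³·u₁v₁(v₁−u₁) − u·v, x³ − t₁(t₁+1)) be the coordinate ring of the product S × F₁ of the affine surface S: w³·u₁v₁(v₁−u₁) = u·v and the affine curve F₁: x³ = t₁(t₁+1), let K = Frac(A), and let σ be the ℂ-algebra automorphism of K of order 3 determined by σ(w) = ω²·w, σ(x) = ω·x, σ(u) = u, σ(v) = v, σ(t₁) = t₁ (the diagonal G = ℤ/3ℤ action). Then the fixed field K^σ is isomorphic as a ℂ-algebra to Frac(ℂ[t₁,u,v,y₁]/(y₁³·u₁v₁(v₁−u₁) − u·v·t₁(t₁+1))), an isomorphism being induced by y₁ ↦ w·x. In other words, the affine hypersurface Y: y₁³·u₁v₁(v₁−u₁) = u·v·t₁(t₁+1) is birationally equivalent to the quotient (S × F₁)/G. -/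

import Mathlib

/-!
Formalization conventions.

* The function field of an affine variety whose coordinate ring `ℂ[x₁,…,xₙ]/I` is an
  integral domain is formalized as `FractionRing` of that coordinate ring (for the total
  rings of fractions of the rings appearing here this is the function field).
* Two such varieties are birationally equivalent iff their function fields are
  isomorphic as `ℂ`-algebras.
-/

noncomputable section
open MvPolynomial

/-- `ω = exp(2πi/3) ∈ ℂ`, a fixed primitive cube root of unity. -/
def ω : ℂ := Complex.exp (2 * Real.pi * Complex.I / 3)

/-- Coordinate ring of the affine hypersurface `f = 0` in `ℂⁿ`. -/
abbrev HSurf {n : ℕ} (f : MvPolynomial (Fin n) ℂ) : Type :=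
  MvPolynomial (Fin n) ℂ ⧸ Ideal.span {f}

/-- Coordinate ring of the affine variety `f = g = 0` in `ℂⁿ`. -/
abbrev HSurf2 {n : ℕ} (f g : MvPolynomial (Fin n) ℂ) : Type :=
  MvPolynomial (Fin n) ℂ ⧸ Ideal.span {f, g}

/-- The image of a polynomial `p` in the function field of the hypersurface `f = 0`. -/
def cls {n : ℕ} (f : MvPolynomial (Fin n) ℂ) (p : MvPolynomial (Fin n) ℂ) :
    FractionRing (HSurf f) :=
  algebraMap (HSurf f) (FractionRing (HSurf f)) (Ideal.Quotient.mk _ p)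

/-- The image of a polynomial `p` in the function field of the variety `f = g = 0`. -/
def cls2 {n : ℕ} (f g : MvPolynomial (Fin n) ℂ) (p : MvPolynomial (Fin n) ℂ) :
    FractionRing (HSurf2 f g) :=
  algebraMap (HSurf2 f g) (FractionRing (HSurf2 f g)) (Ideal.Quotient.mk _ p)

/-- `u₁ = 1 + u + v` in the coordinates of `S × F₁`
(`w = X 0`, `u = X 1`, `v = X 2`, `t₁ = X 3`, `x = X 4`). -/
def u₁5 : MvPolynomial (Fin 5) ℂ := 1 + X 1 + X 2

/-- `v₁ = a + b·u + c·v`. -/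
def v₁5 (a b c : ℂ) : MvPolynomial (Fin 5) ℂ := C a + C b * X 1 + C c * X 2

/-- Defining polynomial of the surface `S : w³·u₁v₁(v₁−u₁) = u·v`, as an equation in `ℂ⁵`. -/
def pS5 (a b c : ℂ) : MvPolynomial (Fin 5) ℂ :=
  X 0 ^ 3 * u₁5 * v₁5 a b c * (v₁5 a b c - u₁5) - X 1 * X 2

/-- Defining polynomial of the curve `F₁ : x³ = t₁(t₁+1)`, as an equation in `ℂ⁵`. -/
def pF₁5 : MvPolynomial (Fin 5) ℂ := X 4 ^ 3 - X 3 * (X 3 + 1)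

/-- `u₁ = 1 + u + v` in the coordinates of `Y` (`t₁ = X 0`, `u = X 1`, `v = X 2`, `y₁ = X 3`). -/
def u₁Y : MvPolynomial (Fin 4) ℂ := 1 + X 1 + X 2

/-- `v₁ = a + b·u + c·v`. -/
def v₁Y (a b c : ℂ) : MvPolynomial (Fin 4) ℂ := C a + C b * X 1 + C c * X 2

/-- Defining polynomial of the affine hypersurface `Y : y₁³·u₁v₁(v₁−u₁) = u·v·t₁(t₁+1)`. -/
def pY (a b c : ℂ) : MvPolynomial (Fin 4) ℂ :=
  X 3 ^ 3 * u₁Y * v₁Y a b c * (v₁Y a b c - u₁Y) - X 1 * X 2 * X 0 * (X 0 + 1)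

/-!
Let `L ⊆ K` be the subfield generated by `t₁, u, v` and `y₁ = w * x`. It is fixed by `σ`, and
`K = L(x)` with `x ^ 3 = t₁ * (t₁ + 1) ∈ L`, so `[K : L] ≤ 3 = orderOf σ` and Artin's theorem gives
`K ^ σ = L`. The relations between the generators of `L` include the equation of `Y`, because
`pY(t₁, u, v, w * x) = x ^ 3 * pS + u * v * pF`. Conversely every point of `Y` with
`t₁ * (t₁ + 1) ≠ 0` lifts to `S × F₁`, so for a relation `p` the product `p * t₁ * (t₁ + 1)`
vanishes on `Y`; by the Nullstellensatz and the irreducibility of `Y`, `p` is a multiple of `pY`.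

Irreducibility is Eisenstein's criterion for `D * X ^ n - q * r` at a prime `q`: at `u` for `S` and
`Y`, and at `t₁` for `F₁`. As the coordinate ring of `S` is only a domain, the criterion for `F₁`
over it is applied over its fraction field.
-/

section PrimePolynomials

theorem prime_C_mul_X_pow_sub_C {R : Type*} [CommRing R] [IsDomain R]
    [UniqueFactorizationMonoid R] {D q r : R} {n : ℕ} (hn : 0 < n) (hq : Prime q) (hqr : ¬ q ∣ r)
    (hD : IsRelPrime D (q * r)) :
    Prime (Polynomial.C D * Polynomial.X ^ n - Polynomial.C (q * r) : Polynomial R) := by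
  have hqD : ¬ q ∣ D := fun h ↦ hq.not_isUnit (hD h (dvd_mul_right q r))
  have hD0 : D ≠ 0 := by rintro rfl; exact hqD (dvd_zero q)
  set F : Polynomial R := Polynomial.C D * Polynomial.X ^ n - Polynomial.C (q * r) with hF
  have hdeg : F.degree = n := by rw [hF]; compute_degree!; simpa [hn.ne'] using hD0
  have hcoeff_n : F.coeff n = D := by simp [hF, Polynomial.coeff_C, hn.ne']
  have hcoeff_zero : F.coeff 0 = -(q * r) := by simp [hF, hn.ne]
  have hprim : F.IsPrimitive := fun d hd ↦ by
    rw [Polynomial.C_dvd_iff_dvd_coeff] at hd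
    exact hD (hcoeff_n ▸ hd n) ((dvd_neg).1 (hcoeff_zero ▸ hd 0))
  refine (Polynomial.irreducible_of_eisenstein_criterion (P := Ideal.span {q})
    ((Ideal.span_singleton_prime hq.ne_zero).2 hq) ?_ ?_ ?_ ?_ hprim).prime
  · rwa [Polynomial.leadingCoeff, Polynomial.natDegree_eq_of_degree_eq_some hdeg, hcoeff_n,
      Ideal.mem_span_singleton]
  · intro m hm
    have hmn : m < n := by exact_mod_cast hdeg ▸ hm
    rw [Ideal.mem_span_singleton]
    rcases m.eq_zero_or_pos with rfl | hm0
    · exact hcoeff_zero ▸ (dvd_mul_right q r).neg_right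
    · simp [hF, Polynomial.coeff_X_pow, Polynomial.coeff_C, hmn.ne, hm0.ne']
  · simpa [hdeg] using hn
  · rw [hcoeff_zero, Ideal.span_singleton_pow, Ideal.mem_span_singleton, dvd_neg, sq,
      mul_dvd_mul_iff_left hq.ne_zero]
    exact hqr

theorem prime_of_prime_map_of_monic {A B : Type*} [CommRing A] [CommRing B] {i : A →+* B}
    (hi : Function.Injective i) {F : Polynomial A} (hF : F.Monic) (h : Prime (F.map i)) :
    Prime F := by
  refine ⟨fun h0 ↦ h.ne_zero (by simp [h0]),
    fun hu ↦ h.not_isUnit (hu.map (Polynomial.mapRingHom i)), fun p q hpq ↦ ?_⟩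
  simp only [← Polynomial.map_dvd_map i hi hF, Polynomial.map_mul] at hpq ⊢
  exact h.dvd_or_dvd hpq

/-- The identification of `R[X 0, …, X n]` with the polynomials in the single variable `X p` whose
coefficients are polynomials in the remaining variables, reindexed along `p.succAbove`. It turns
statements about one distinguished variable into statements about univariate polynomials. -/
def polynomialInVar (R : Type*) [CommRing R] {n : ℕ} (p : Fin (n + 1)) :
    MvPolynomial (Fin (n + 1)) R ≃ₐ[R] Polynomial (MvPolynomial (Fin n) R) :=
  (renameEquiv R (finSuccEquiv' p)).trans (optionEquivLeft R (Fin n))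

@[simp]
theorem polynomialInVar_X_self (R : Type*) [CommRing R] {n : ℕ} (p : Fin (n + 1)) :
    polynomialInVar R p (X p) = Polynomial.X := by
  simp [polynomialInVar]

@[simp]
theorem polynomialInVar_rename {R : Type*} [CommRing R] {n : ℕ} (p : Fin (n + 1))
    (f : MvPolynomial (Fin n) R) :
    polynomialInVar R p (rename p.succAbove f) = Polynomial.C f := by
  suffices ((polynomialInVar R p).toAlgHom.comp (rename p.succAbove)) =
      IsScalarTower.toAlgHom R (MvPolynomial (Fin n) R) (Polynomial (MvPolynomial (Fin n) R)) from
    DFunLike.congr_fun this f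
  ext i : 1
  simp [polynomialInVar]

theorem prime_rename_mul_X_pow_sub_rename {R : Type*} [CommRing R] [IsDomain R]
    [UniqueFactorizationMonoid R] {n m : ℕ} (hm : 0 < m) (p : Fin (n + 1))
    {D q r : MvPolynomial (Fin n) R} (hq : Prime q) (hqr : ¬ q ∣ r) (hD : IsRelPrime D (q * r)) :
    Prime (rename p.succAbove D * X p ^ m - rename p.succAbove (q * r)) := by
  rw [← MulEquiv.prime_iff (polynomialInVar R p)]
  simpa using prime_C_mul_X_pow_sub_C hm hq hqr hD

theorem prime_X_pow_sub_rename_of_map {A B : Type*} [CommRing A] [CommRing B] {i : A →+* B}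
    (hi : Function.Injective i) {n m : ℕ} (hm : 0 < m) (p : Fin (n + 1))
    {f : MvPolynomial (Fin n) A}
    (h : Prime (X p ^ m - rename p.succAbove (map i f))) :
    Prime (X p ^ m - rename p.succAbove f) := by
  rw [← MulEquiv.prime_iff (polynomialInVar _ p)] at h ⊢
  simp only [map_sub, map_pow, polynomialInVar_X_self, polynomialInVar_rename] at h ⊢
  refine prime_of_prime_map_of_monic (map_injective i hi)
    (Polynomial.monic_X_pow_sub_C f hm.ne') ?_
  simpa using h

theorem not_dvd_of_eval_eq_zero {σ R : Type*} [CommSemiring R] {f g : MvPolynomial σ R} (z : σ → R)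
    (hf : eval z f = 0) (hg : eval z g ≠ 0) : ¬ f ∣ g := fun h ↦
  hg (zero_dvd_iff.1 (hf ▸ map_dvd (eval z) h))

theorem isRelPrime_of_eval {σ R : Type*} [CommSemiring R] {f g : MvPolynomial σ R}
    (hf : Irreducible f) (z : σ → R) (hfz : eval z f = 0) (hgz : eval z g ≠ 0) :
    IsRelPrime g f :=
  (hf.isRelPrime_iff_not_dvd.2 (not_dvd_of_eval_eq_zero z hfz hgz)).symm

theorem prime_X_add_one {R : Type*} [CommRing R] [IsDomain R] {n : ℕ} (i : Fin (n + 1)) :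
    Prime (X i + 1 : MvPolynomial (Fin (n + 1)) R) := by
  rw [← MulEquiv.prime_iff (polynomialInVar R i)]
  simpa using Polynomial.prime_X_sub_C (-1 : MvPolynomial (Fin n) R)

theorem prime_X_pow_sub_rename_X_mul_X_add_one {R : Type*} [CommRing R] [IsDomain R]
    [UniqueFactorizationMonoid R] {m : ℕ} (hm : 0 < m) :
    Prime (X 1 ^ m - rename (Fin.succAbove 1) (X 0 * (X 0 + 1)) : MvPolynomial (Fin 2) R) := by
  have hndvd : ¬ (X 0 : MvPolynomial (Fin 1) R) ∣ X 0 + 1 :=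
    not_dvd_of_eval_eq_zero 0 (by simp) (by simp)
  have h := prime_rename_mul_X_pow_sub_rename hm 1 X_prime hndvd isRelPrime_one_left
  rwa [map_one, one_mul] at h

theorem prime_X_pow_sub_X_mul_X_add_one {A : Type*} [CommRing A] [IsDomain A] {m : ℕ}
    (hm : 0 < m) : Prime (X 1 ^ m - X 0 * (X 0 + 1) : MvPolynomial (Fin 2) A) := by
  have h : rename (Fin.succAbove 1) (X 0 * (X 0 + 1) : MvPolynomial (Fin 1) A) =
      X 0 * (X 0 + 1) := by
    simp only [map_mul, map_add, map_one, rename_X]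
    rfl
  rw [← h]
  refine prime_X_pow_sub_rename_of_map (FaithfulSMul.algebraMap_injective A (FractionRing A))
    hm 1 ?_
  simpa only [map_mul, map_add, map_one, map_X] using prime_X_pow_sub_rename_X_mul_X_add_one hm

theorem isPrime_map_C_sup_span_singleton {A τ : Type*} [CommRing A] {I : Ideal A}
    {g : MvPolynomial τ A} (hg : Prime (map (Ideal.Quotient.mk I) g)) :
    (I.map C ⊔ Ideal.span {g}).IsPrime := by
  set π : MvPolynomial τ A →+* MvPolynomial τ (A ⧸ I) := map (Ideal.Quotient.mk I)
  have hcomap : (Ideal.span {π g}).comap π = I.map C ⊔ Ideal.span {g} := by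
    rw [← Set.image_singleton, ← Ideal.map_span,
      Ideal.comap_map_of_surjective π (map_surjective _ Ideal.Quotient.mk_surjective),
      ← RingHom.ker_eq_comap_bot, ker_map, Ideal.mk_ker, sup_comm]
  exact hcomap ▸ ((Ideal.span_singleton_prime hg.ne_zero).2 hg).comap π

theorem isPrime_map_rename_sup_span_rename {k ρ σ τ : Type*} [CommRing k] (e : σ ⊕ τ ≃ ρ)
    {I : Ideal (MvPolynomial σ k)} {g : MvPolynomial τ k}
    (hg : Prime (map (algebraMap k (MvPolynomial σ k ⧸ I)) g)) :
    (I.map (rename (R := k) (e ∘ Sum.inl)) ⊔ Ideal.span {rename (e ∘ Sum.inr) g}).IsPrime := by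
  let E : MvPolynomial τ (MvPolynomial σ k) ≃ₐ[k] MvPolynomial ρ k :=
    (sumAlgEquiv k τ σ).symm.trans (renameEquiv k ((Equiv.sumComm τ σ).trans e))
  have hinl : (RingHomClass.toRingHom E).comp C =
      (rename (R := k) (e ∘ Sum.inl)).toRingHom := by
    ext <;> simp [E]
  have hinr : (RingHomClass.toRingHom E).comp (map C) =
      (rename (R := k) (e ∘ Sum.inr)).toRingHom := by
    ext <;> simp [E]
  have hmap : (I.map C ⊔ Ideal.span {map C g}).map (RingHomClass.toRingHom E) =
      I.map (rename (R := k) (e ∘ Sum.inl)) ⊔ Ideal.span {rename (e ∘ Sum.inr) g} := by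
    rw [Ideal.map_sup, Ideal.map_map, hinl, Ideal.map_span, Set.image_singleton,
      ← RingHom.comp_apply, hinr]
    rfl
  have hprime : (I.map C ⊔ Ideal.span {map C g}).IsPrime :=
    isPrime_map_C_sup_span_singleton (by rwa [map_map])
  exact hmap ▸ Ideal.map_isPrime_of_equiv E

end PrimePolynomials

section FunctionField

variable {k ι : Type*} [Field k] (I : Ideal (MvPolynomial ι k))

/-- The `i`-th coordinate function, as an element of the function field of the variety cut out by
`I`. -/
def coordFun (i : ι) : FractionRing (MvPolynomial ι k ⧸ I) :=
  algebraMap (MvPolynomial ι k ⧸ I) _ (Ideal.Quotient.mk I (X i))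

theorem aeval_coordFun (p : MvPolynomial ι k) :
    aeval (coordFun I) p = algebraMap (MvPolynomial ι k ⧸ I) _ (Ideal.Quotient.mk I p) :=
  DFunLike.congr_fun (algHom_ext (f := aeval (coordFun I))
    (g := (IsScalarTower.toAlgHom k (MvPolynomial ι k ⧸ I) _).comp (Ideal.Quotient.mkₐ k I))
    fun i ↦ by simp [coordFun]) p

theorem aeval_coordFun_eq_zero_iff {p : MvPolynomial ι k} :
    aeval (coordFun I) p = 0 ↔ p ∈ I := by
  rw [aeval_coordFun, FaithfulSMul.algebraMap_eq_zero_iff, Ideal.Quotient.eq_zero_iff_mem]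

theorem adjoin_range_coordFun [I.IsPrime] :
    IntermediateField.adjoin k (Set.range (coordFun I)) = ⊤ := by
  refine eq_top_iff.2 fun x _ ↦ ?_
  obtain ⟨r, s, -, rfl⟩ := IsFractionRing.div_surjective (A := MvPolynomial ι k ⧸ I) x
  obtain ⟨p, rfl⟩ := Ideal.Quotient.mk_surjective r
  obtain ⟨q, rfl⟩ := Ideal.Quotient.mk_surjective s
  exact (IntermediateField.mem_adjoin_range_iff k _ _).2 ⟨p, q, by simp only [aeval_coordFun]⟩

variable {I}

open scoped IntermediateField.algebraAdjoinAdjoin in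
theorem exists_algEquiv_adjoin_range {K : Type*} [Field K] [Algebra k K] {z : ι → K}
    (hz : RingHom.ker (aeval z : MvPolynomial ι k →ₐ[k] K) = I) :
    ∃ e : FractionRing (MvPolynomial ι k ⧸ I) ≃ₐ[k] IntermediateField.adjoin k (Set.range z),
      ∀ i, (e (coordFun I i) : K) = z i := by
  subst hz
  let e := (Ideal.quotientKerEquivRange (aeval z : MvPolynomial ι k →ₐ[k] K)).trans
    (Subalgebra.equivOfEq _ _ (Algebra.adjoin_range_eq_range_aeval k z).symm)
  refine ⟨IsFractionRing.algEquivOfAlgEquiv e, fun i ↦ ?_⟩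
  rw [coordFun, IsFractionRing.algEquivOfAlgEquiv_algebraMap]
  exact aeval_X z i

/-- The automorphism of the polynomial ring rescaling the variable `X i` by the unit `ζ i`. -/
def scaleVars (ζ : ι → kˣ) : MvPolynomial ι k ≃ₐ[k] MvPolynomial ι k :=
  .ofAlgHom (aeval fun i ↦ (ζ i : k) • X i) (aeval fun i ↦ (ζ i : k)⁻¹ • X i)
    (by ext i : 1; simp [smul_smul])
    (by ext i : 1; simp [smul_smul])

@[simp]
theorem scaleVars_X (ζ : ι → kˣ) (i : ι) : scaleVars ζ (X i) = (ζ i : k) • X i :=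
  aeval_X _ i

@[simp]
theorem scaleVars_C (ζ : ι → kˣ) (r : k) : scaleVars ζ (C r) = C r :=
  aeval_C _ r

theorem exists_algEquiv_aeval_coordFun {φ : MvPolynomial ι k ≃ₐ[k] MvPolynomial ι k}
    (hI : I.map (RingHomClass.toRingHom φ) = I) :
    ∃ σ : FractionRing (MvPolynomial ι k ⧸ I) ≃ₐ[k] FractionRing (MvPolynomial ι k ⧸ I),
      ∀ p, σ (aeval (coordFun I) p) = aeval (coordFun I) (φ p) := by
  refine ⟨IsFractionRing.algEquivOfAlgEquiv (Ideal.quotientEquivAlg I I φ hI.symm), fun p ↦ ?_⟩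
  rw [aeval_coordFun, IsFractionRing.algEquivOfAlgEquiv_algebraMap, Ideal.quotientEquivAlg_mk,
    aeval_coordFun]

end FunctionField

section FixedField

variable {k K : Type*} [Field k] [Field K] [Algebra k K]

theorem orderOf_eq_of_adjoin_eq_top {ι : Type*} {z : ι → K}
    (hz : IntermediateField.adjoin k (Set.range z) = ⊤) {n : ℕ} {σ : K ≃ₐ[k] K} {ζ : ι → k}
    (hσ : ∀ i, σ (z i) = ζ i • z i) (hζ : ∀ i, ζ i ^ n = 1) {j : ι}
    (hj : IsPrimitiveRoot (ζ j) n) (hzj : z j ≠ 0) : orderOf σ = n := by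
  have hpow (m : ℕ) (i : ι) : (σ ^ m) (z i) = ζ i ^ m • z i := by
    induction m with
    | zero => simp
    | succ m ih => rw [pow_succ', AlgEquiv.mul_apply, ih, map_smul, hσ, smul_smul, pow_succ]
  have hn : σ ^ n = 1 := by
    have hfix := (IntermediateField.forall_mem_adjoin_smul_eq_self_iff k (σ ^ n)).2 <|
      Set.forall_mem_range.2 fun i ↦ (hpow n i).trans (by rw [hζ, one_smul])
    exact AlgEquiv.ext fun y ↦ hfix y (hz ▸ IntermediateField.mem_top)
  have hzpow : ζ j ^ orderOf σ = 1 := by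
    refine smul_left_injective k hzj ?_
    simp only [← hpow, pow_orderOf_eq_one, AlgEquiv.one_apply, one_smul]
  exact Nat.dvd_antisymm (orderOf_dvd_of_pow_eq_one hn) (hj.dvd_of_pow_eq_one _ hzpow)

open scoped IntermediateField in
theorem fixedField_zpowers_eq_bot {σ : K ≃ₐ[k] K} (hσ : 0 < orderOf σ) {x : K}
    (hx : x ^ orderOf σ ∈ (algebraMap k K).range) (hkx : k⟮x⟯ = ⊤) :
    IntermediateField.fixedField (Subgroup.zpowers σ) = ⊥ := by
  obtain ⟨r, hr⟩ := hx
  have hmonic : (Polynomial.X ^ orderOf σ - Polynomial.C r).Monic :=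
    Polynomial.monic_X_pow_sub_C r hσ.ne'
  have hroot : Polynomial.aeval x (Polynomial.X ^ orderOf σ - Polynomial.C r) = 0 := by simp [hr]
  have hint : IsIntegral k x := ⟨_, hmonic, hroot⟩
  have hfinite : FiniteDimensional k k⟮x⟯ := IntermediateField.adjoin.finiteDimensional hint
  have : FiniteDimensional k K := .of_finrank_pos <| by
    rw [← IntermediateField.finrank_top', ← hkx]
    exact Module.finrank_pos
  have hle : Module.finrank k K ≤ orderOf σ := by
    rw [← IntermediateField.finrank_top', ← hkx, IntermediateField.adjoin.finrank hint]
    exact (Polynomial.natDegree_le_natDegree (minpoly.min k x hmonic hroot)).trans_eq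
      (Polynomial.natDegree_X_pow_sub_C)
  set L := IntermediateField.fixedField (Subgroup.zpowers σ)
  have hL : Module.finrank L K = orderOf σ := by
    rw [IntermediateField.finrank_fixedField_eq_card, Nat.card_zpowers]
  refine (IntermediateField.eq_of_le_of_finrank_le' bot_le ?_).symm
  rw [IntermediateField.finrank_bot', hL]
  exact hle

open scoped IntermediateField in
theorem apply_eq_self_iff_mem_of_adjoin_eq_top {σ : K ≃ₐ[k] K} (hσ : 0 < orderOf σ)
    {L : IntermediateField k K} (hL : ∀ y ∈ L, σ y = y) {x : K} (hx : x ^ orderOf σ ∈ L)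
    (hLx : L⟮x⟯ = ⊤) {y : K} : σ y = y ↔ y ∈ L := by
  refine ⟨fun hy ↦ ?_, hL y⟩
  let τ : K ≃ₐ[L] K :=
    L.fixingSubgroupEquiv ⟨σ, (IntermediateField.mem_fixingSubgroup_iff L σ).2 hL⟩
  have hτ : orderOf τ = orderOf σ := by rw [MulEquiv.orderOf_eq, Subgroup.orderOf_mk]
  have hbot := fixedField_zpowers_eq_bot (hτ ▸ hσ) (hτ ▸ ⟨⟨_, hx⟩, rfl⟩) hLx
  have hle : Subgroup.zpowers τ ≤ MulAction.stabilizer (K ≃ₐ[L] K) y := Subgroup.zpowers_le.2 hy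
  have hmem : y ∈ IntermediateField.fixedField (Subgroup.zpowers τ) :=
    (IntermediateField.mem_fixedField_iff _ y).2 fun f hf ↦ hle hf
  rw [hbot, IntermediateField.mem_bot] at hmem
  obtain ⟨l, rfl⟩ := hmem
  exact l.2

end FixedField
/-- The product `u₁v₁(v₁ − u₁)` as a polynomial in `u = X 0` and `v = X 1`. -/
def branchPoly (a b c : ℂ) : MvPolynomial (Fin 2) ℂ :=
  (1 + X 0 + X 1) * (C a + C b * X 0 + C c * X 1) *
    (C a + C b * X 0 + C c * X 1 - (1 + X 0 + X 1))

theorem eval_zero_branchPoly (a b c : ℂ) : eval 0 (branchPoly a b c) = a * (a - 1) := by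
  simp [branchPoly]

/-- The defining polynomial of `S` in `w = X 0`, `u = X 1` and `v = X 2`. -/
def surfacePoly (a b c : ℂ) : MvPolynomial (Fin 3) ℂ :=
  rename (Fin.succAbove 0) (branchPoly a b c) * X 0 ^ 3 - rename (Fin.succAbove 0) (X 0 * X 1)

theorem pY_eq_rename (a b c : ℂ) :
    pY a b c = rename (Fin.succAbove 3) (rename Fin.succ (branchPoly a b c)) * X 3 ^ 3 -
      rename (Fin.succAbove 3) (X 1 * (X 2 * X 0 * (X 0 + 1))) := by
  have h0 : Fin.succAbove (3 : Fin 4) 0 = 0 := rfl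
  have h1 : Fin.succAbove (3 : Fin 4) 1 = 1 := rfl
  have h2 : Fin.succAbove (3 : Fin 4) 2 = 2 := rfl
  simp only [pY, u₁Y, v₁Y, branchPoly, map_mul, map_add, map_sub, map_one, rename_X, rename_C,
    Fin.succ_zero_eq_one, Fin.succ_one_eq_two, h0, h1, h2]
  ring

theorem rename_finSumFinEquiv_inl_surfacePoly (a b c : ℂ) :
    rename ((finSumFinEquiv : Fin 3 ⊕ Fin 2 ≃ Fin 5) ∘ Sum.inl) (surfacePoly a b c) =
      pS5 a b c := by
  have h0 : (finSumFinEquiv : Fin 3 ⊕ Fin 2 ≃ Fin 5) (.inl 0) = 0 := rfl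
  have h1 : (finSumFinEquiv : Fin 3 ⊕ Fin 2 ≃ Fin 5) (.inl 1) = 1 := rfl
  have h2 : (finSumFinEquiv : Fin 3 ⊕ Fin 2 ≃ Fin 5) (.inl 2) = 2 := rfl
  simp only [surfacePoly, branchPoly, pS5, u₁5, v₁5, map_mul, map_add, map_sub, map_pow, map_one,
    rename_X, rename_C, Fin.succAbove_zero, Fin.succ_zero_eq_one, Fin.succ_one_eq_two,
    Function.comp_apply, h0, h1, h2]
  ring

theorem rename_finSumFinEquiv_inr_X_pow_sub :
    rename ((finSumFinEquiv : Fin 3 ⊕ Fin 2 ≃ Fin 5) ∘ Sum.inr)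
      (X 1 ^ 3 - X 0 * (X 0 + 1) : MvPolynomial (Fin 2) ℂ) = pF₁5 := by
  have h3 : (finSumFinEquiv : Fin 3 ⊕ Fin 2 ≃ Fin 5) (.inr 0) = 3 := rfl
  have h4 : (finSumFinEquiv : Fin 3 ⊕ Fin 2 ≃ Fin 5) (.inr 1) = 4 := rfl
  simp [pF₁5, h3, h4]

section Irreducibility

variable {a b c : ℂ} (ha0 : a ≠ 0) (ha1 : a ≠ 1)
include ha0 ha1

theorem eval_zero_branchPoly_ne_zero : eval 0 (branchPoly a b c) ≠ 0 :=
  eval_zero_branchPoly a b c ▸ mul_ne_zero ha0 (sub_ne_zero.2 ha1)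

theorem prime_surfacePoly : Prime (surfacePoly a b c) := by
  have hD (i : Fin 2) : IsRelPrime (branchPoly a b c) (X i) :=
    isRelPrime_of_eval X_prime.irreducible 0 (eval_X i) (eval_zero_branchPoly_ne_zero ha0 ha1)
  have hndvd : ¬ (X 0 : MvPolynomial (Fin 2) ℂ) ∣ X 1 :=
    not_dvd_of_eval_eq_zero ![0, 1] (by simp) (by simp)
  exact prime_rename_mul_X_pow_sub_rename three_pos 0 X_prime hndvd ((hD 0).mul_right (hD 1))

theorem prime_pY : Prime (pY a b c) := by
  have hbranch := eval_zero_branchPoly_ne_zero (b := b) (c := c) ha0 ha1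
  let D : MvPolynomial (Fin 3) ℂ := rename Fin.succ (branchPoly a b c)
  have heval (z : Fin 3 → ℂ) (hz : z ∘ Fin.succ = 0) : eval z D ≠ 0 := by
    rwa [eval_rename, hz]
  have hX (i : Fin 3) : IsRelPrime D (X i) :=
    isRelPrime_of_eval X_prime.irreducible 0 (eval_X i) (heval 0 rfl)
  have hX' : IsRelPrime D (X 0 + 1) :=
    isRelPrime_of_eval (prime_X_add_one 0).irreducible ![-1, 0, 0] (by simp)
      (heval _ (by ext i; fin_cases i <;> rfl))
  have hndvd : ¬ (X 1 : MvPolynomial (Fin 3) ℂ) ∣ X 2 * X 0 * (X 0 + 1) :=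
    not_dvd_of_eval_eq_zero ![1, 0, 1] (by simp) (by simp)
  rw [pY_eq_rename]
  exact prime_rename_mul_X_pow_sub_rename three_pos 3 X_prime hndvd
    ((hX 1).mul_right (((hX 2).mul_right (hX 0)).mul_right hX'))

theorem isPrime_span_pS5_pF₁5 : (Ideal.span {pS5 a b c, pF₁5}).IsPrime := by
  have hS := prime_surfacePoly (b := b) (c := c) ha0 ha1
  have hprime := (Ideal.span_singleton_prime hS.ne_zero).2 hS
  have h := isPrime_map_rename_sup_span_rename finSumFinEquiv
    (I := Ideal.span {surfacePoly a b c}) (g := X 1 ^ 3 - X 0 * (X 0 + 1))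
    (by simpa only [map_sub, map_pow, map_mul, map_add, map_one, map_X] using
      prime_X_pow_sub_X_mul_X_add_one three_pos)
  rwa [Ideal.map_span, Set.image_singleton, ← Ideal.span_union, Set.singleton_union,
    rename_finSumFinEquiv_inr_X_pow_sub, rename_finSumFinEquiv_inl_surfacePoly] at h

end Irreducibility

section QuotientMap

theorem comap_bind₁_le_of_forall_exists {k σ τ : Type*} [Field k] [IsAlgClosed k] [Finite τ]
    {I : Ideal (MvPolynomial σ k)} {J : Ideal (MvPolynomial τ k)} [J.IsPrime]
    {q : τ → MvPolynomial σ k} {h : MvPolynomial τ k} (hh : h ∉ J)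
    (hlift : ∀ y ∈ zeroLocus k J, aeval y h ≠ 0 →
      ∃ z ∈ zeroLocus k I, (fun i ↦ aeval z (q i)) = y) :
    I.comap (bind₁ q) ≤ J := by
  intro p hp
  refine (Ideal.IsPrime.mem_or_mem ‹_› (?_ : p * h ∈ J)).resolve_right hh
  rw [← IsPrime.vanishingIdeal_zeroLocus (K := k) J, mem_vanishingIdeal_iff]
  intro y hy
  rw [map_mul, mul_eq_zero, or_iff_not_imp_right]
  intro hhy
  obtain ⟨z, hz, rfl⟩ := hlift y hy hhy
  exact (aeval_bind₁ z q p).symm.trans (hz _ hp)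

theorem ker_aeval_aeval_coordFun {k σ τ : Type*} [Field k] (I : Ideal (MvPolynomial σ k))
    (q : τ → MvPolynomial σ k) :
    RingHom.ker (aeval (R := k) fun i ↦ aeval (coordFun I) (q i)) = I.comap (bind₁ q) := by
  ext p
  rw [RingHom.mem_ker, ← aeval_bind₁, aeval_coordFun_eq_zero_iff, Ideal.mem_comap]

/-- The map `S × F₁ → Y`, `(w, u, v, t₁, x) ↦ (t₁, u, v, w * x)`, given by its components. -/
def quotientMap : Fin 4 → MvPolynomial (Fin 5) ℂ := ![X 3, X 1, X 2, X 0 * X 4]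

theorem bind₁_quotientMap_pY (a b c : ℂ) :
    bind₁ quotientMap (pY a b c) = X 4 ^ 3 * pS5 a b c + X 1 * X 2 * pF₁5 := by
  simp only [quotientMap, pY, pS5, pF₁5, u₁Y, v₁Y, u₁5, v₁5, map_mul, map_add, map_sub, map_pow,
    map_one, bind₁_X_right, bind₁_C_right, Matrix.cons_val]
  ring

theorem exists_mem_zeroLocus_quotientMap_eq {a b c : ℂ} {y : Fin 4 → ℂ}
    (hy : y ∈ zeroLocus ℂ (Ideal.span {pY a b c}))
    (ht : aeval y (X 0 * (X 0 + 1) : MvPolynomial (Fin 4) ℂ) ≠ 0) :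
    ∃ z ∈ zeroLocus ℂ (Ideal.span {pS5 a b c, pF₁5}),
      (fun i ↦ aeval z (quotientMap i)) = y := by
  obtain ⟨x, hx⟩ := IsAlgClosed.exists_pow_nat_eq (y 0 * (y 0 + 1)) three_pos
  have hx0 : x ≠ 0 := (pow_ne_zero_iff three_ne_zero).1 (by simpa [hx] using ht)
  set z : Fin 5 → ℂ := ![y 3 / x, y 1, y 2, y 0, x] with hz
  have hzy : (fun i ↦ aeval z (quotientMap i)) = y := by
    ext i
    fin_cases i <;> simp [quotientMap, hz, hx0]
  have hF : aeval z pF₁5 = 0 := by simpa [pF₁5, hz, sub_eq_zero] using hx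
  have hS : aeval z (pS5 a b c) = 0 := by
    have hpY : aeval z (bind₁ quotientMap (pY a b c)) = 0 := by
      rw [aeval_bind₁, hzy]
      exact hy _ (Ideal.mem_span_singleton_self _)
    rw [bind₁_quotientMap_pY, map_add, map_mul, map_mul, hF, mul_zero, add_zero] at hpY
    exact (mul_eq_zero.1 hpY).resolve_left (by simp [hz, hx0])
  refine ⟨z, ?_, hzy⟩
  rw [zeroLocus_span]
  rintro p (rfl | rfl)
  exacts [hS, hF]

theorem comap_bind₁_quotientMap {a b c : ℂ} (ha0 : a ≠ 0) (ha1 : a ≠ 1) :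
    (Ideal.span {pS5 a b c, pF₁5}).comap (bind₁ quotientMap) = Ideal.span {pY a b c} := by
  have hY := prime_pY (b := b) (c := c) ha0 ha1
  have := (Ideal.span_singleton_prime hY.ne_zero).2 hY
  have ht : X 0 * (X 0 + 1) ∉ Ideal.span {pY a b c} := by
    rw [Ideal.mem_span_singleton]
    exact not_dvd_of_eval_eq_zero ![1, 0, 0, 0] (by simp [pY]) (by simp)
  refine le_antisymm (comap_bind₁_le_of_forall_exists ht fun y hy hty ↦
    exists_mem_zeroLocus_quotientMap_eq hy hty) ?_
  rw [Ideal.span_singleton_le_iff_mem, Ideal.mem_comap, bind₁_quotientMap_pY,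
    Ideal.mem_span_pair]
  exact ⟨_, _, rfl⟩

end QuotientMap

section DiagonalAction

theorem isPrimitiveRoot_ω : IsPrimitiveRoot ω 3 :=
  Complex.isPrimitiveRoot_exp 3 three_ne_zero

/-- The characters by which a generator of `G` acts on the coordinates `w, u, v, t₁, x`. -/
def diagonalWeight : Fin 5 → ℂˣ :=
  let ζ := Units.mk0 ω (isPrimitiveRoot_ω.ne_zero three_ne_zero)
  ![ζ ^ 2, 1, 1, 1, ζ]

theorem scaleVars_pS5 (a b c : ℂ) : scaleVars diagonalWeight (pS5 a b c) = pS5 a b c := by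
  have hω : (ω ^ 2) ^ 3 = 1 := by rw [pow_right_comm, isPrimitiveRoot_ω.pow_eq_one, one_pow]
  simp [pS5, u₁5, v₁5, diagonalWeight, smul_pow, hω]

theorem scaleVars_pF₁5 : scaleVars diagonalWeight pF₁5 = pF₁5 := by
  simp [pF₁5, diagonalWeight, smul_pow, isPrimitiveRoot_ω.pow_eq_one]

theorem map_span_pS5_pF₁5_scaleVars (a b c : ℂ) :
    (Ideal.span {pS5 a b c, pF₁5}).map (RingHomClass.toRingHom (scaleVars diagonalWeight)) =
      Ideal.span {pS5 a b c, pF₁5} := by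
  rw [Ideal.map_span, Set.image_pair]
  exact congr_arg₂ (fun p q ↦ Ideal.span {p, q}) (scaleVars_pS5 a b c) scaleVars_pF₁5

theorem coordFun_four_ne_zero (a b c : ℂ) : coordFun (Ideal.span {pS5 a b c, pF₁5}) 4 ≠ 0 := by
  obtain ⟨x, hx⟩ := IsAlgClosed.exists_pow_nat_eq (2 : ℂ) three_pos
  have hx0 : x ≠ 0 := by rintro rfl; norm_num at hx
  have hz : ![0, 0, 0, 1, x] ∈ zeroLocus ℂ (Ideal.span {pS5 a b c, pF₁5}) := by
    rw [zeroLocus_span]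
    rintro p (rfl | rfl)
    · simp [pS5]
    · simp [pF₁5, hx, one_add_one_eq_two]
  rw [← aeval_X (R := ℂ) (coordFun _), Ne, aeval_coordFun_eq_zero_iff]
  exact fun h ↦ hx0 (by simpa using hz _ h)

variable {I : Ideal (MvPolynomial (Fin 5) ℂ)}

/-- The action of a generator of `G = ℤ/3ℤ` on the function field of a subvariety of `ℂ⁵`, given on
the coordinate functions by the characters `diagonalWeight`. -/
def IsDiagonalAction (σ : FractionRing (MvPolynomial (Fin 5) ℂ ⧸ I) ≃ₐ[ℂ]
    FractionRing (MvPolynomial (Fin 5) ℂ ⧸ I)) : Prop :=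
  ∀ i, σ (coordFun I i) = (diagonalWeight i : ℂ) • coordFun I i

theorem exists_isDiagonalAction (a b c : ℂ) :
    ∃ σ, IsDiagonalAction (I := Ideal.span {pS5 a b c, pF₁5}) σ := by
  obtain ⟨σ, hσ⟩ := exists_algEquiv_aeval_coordFun (map_span_pS5_pF₁5_scaleVars a b c)
  exact ⟨σ, fun i ↦ by simpa using hσ (X i)⟩

open scoped IntermediateField in
theorem adjoin_quotientMap_adjoin_coordFun_eq_top [I.IsPrime] (hx : coordFun I 4 ≠ 0) :
    (IntermediateField.adjoin ℂ
      (Set.range fun i ↦ aeval (coordFun I) (quotientMap i)))⟮coordFun I 4⟯ = ⊤ := by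
  let z : Fin 4 → FractionRing (MvPolynomial (Fin 5) ℂ ⧸ I) :=
    fun i ↦ aeval (coordFun I) (quotientMap i)
  let M := IntermediateField.adjoin ℂ (Set.range z ∪ {coordFun I 4})
  have hz (i : Fin 4) : z i ∈ M := IntermediateField.subset_adjoin _ _ (.inl ⟨i, rfl⟩)
  have hxM : coordFun I 4 ∈ M := IntermediateField.subset_adjoin _ _ (.inr rfl)
  have hw : coordFun I 0 = z 3 / coordFun I 4 := by simp [z, quotientMap, hx]
  have hcoord (i : Fin 5) : coordFun I i ∈ M := by
    fin_cases i
    · exact hw ▸ M.div_mem (hz 3) hxM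
    · simpa [z, quotientMap] using hz 1
    · simpa [z, quotientMap] using hz 2
    · simpa [z, quotientMap] using hz 0
    · exact hxM
  rw [← IntermediateField.restrictScalars_eq_top_iff (K := ℂ),
    IntermediateField.adjoin_adjoin_left, ← top_le_iff, ← adjoin_range_coordFun,
    IntermediateField.adjoin_le_iff]
  exact Set.range_subset_iff.2 hcoord

namespace IsDiagonalAction

variable {σ : FractionRing (MvPolynomial (Fin 5) ℂ ⧸ I) ≃ₐ[ℂ]
    FractionRing (MvPolynomial (Fin 5) ℂ ⧸ I)} (hσ : IsDiagonalAction σ)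
include hσ

theorem apply_aeval_quotientMap (i : Fin 4) :
    σ (aeval (coordFun I) (quotientMap i)) = aeval (coordFun I) (quotientMap i) := by
  have hω : ω * ω ^ 2 = 1 := by rw [← pow_succ', isPrimitiveRoot_ω.pow_eq_one]
  fin_cases i <;> simp [quotientMap, hσ _, diagonalWeight, smul_smul, hω]

variable [I.IsPrime]

theorem orderOf_eq_three (hx : coordFun I 4 ≠ 0) : orderOf σ = 3 := by
  have hpow (i : Fin 5) : (diagonalWeight i : ℂ) ^ 3 = 1 := by
    fin_cases i <;> simp [diagonalWeight, pow_right_comm _ 2 3, isPrimitiveRoot_ω.pow_eq_one]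
  exact orderOf_eq_of_adjoin_eq_top (adjoin_range_coordFun I) hσ hpow (j := 4)
    isPrimitiveRoot_ω hx

theorem apply_eq_self_iff_mem_adjoin (hF : pF₁5 ∈ I) (hx : coordFun I 4 ≠ 0)
    {y : FractionRing (MvPolynomial (Fin 5) ℂ ⧸ I)} :
    σ y = y ↔ y ∈ IntermediateField.adjoin ℂ
      (Set.range fun i ↦ aeval (coordFun I) (quotientMap i)) := by
  have horder := hσ.orderOf_eq_three hx
  set L := IntermediateField.adjoin ℂ (Set.range fun i ↦ aeval (coordFun I) (quotientMap i))
  have hfix : ∀ y ∈ L, σ y = y :=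
    (IntermediateField.forall_mem_adjoin_smul_eq_self_iff ℂ σ).2 <|
      Set.forall_mem_range.2 hσ.apply_aeval_quotientMap
  have ht : coordFun I 3 ∈ L := IntermediateField.subset_adjoin _ _ ⟨0, aeval_X _ _⟩
  have hx3 : coordFun I 4 ^ 3 = coordFun I 3 * (coordFun I 3 + 1) := by
    simpa [pF₁5, sub_eq_zero] using (aeval_coordFun_eq_zero_iff I).2 hF
  exact apply_eq_self_iff_mem_of_adjoin_eq_top (horder ▸ three_pos) hfix
    (by rw [horder, hx3]; exact mul_mem ht (add_mem ht (one_mem L)))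
    (adjoin_quotientMap_adjoin_coordFun_eq_top hx)

theorem exists_algEquiv_equalizer (hF : pF₁5 ∈ I) (hx : coordFun I 4 ≠ 0)
    {J : Ideal (MvPolynomial (Fin 4) ℂ)} (hJ : I.comap (bind₁ quotientMap) = J) :
    ∃ ψ : FractionRing (MvPolynomial (Fin 4) ℂ ⧸ J) ≃ₐ[ℂ]
        σ.toAlgHom.equalizer (AlgHom.id ℂ (FractionRing (MvPolynomial (Fin 5) ℂ ⧸ I))),
      ∀ i, (ψ (coordFun J i) : FractionRing (MvPolynomial (Fin 5) ℂ ⧸ I)) =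
        aeval (coordFun I) (quotientMap i) := by
  obtain ⟨e, he⟩ := exists_algEquiv_adjoin_range
    ((ker_aeval_aeval_coordFun I quotientMap).trans hJ)
  have hfixed : (IntermediateField.adjoin ℂ
      (Set.range fun i ↦ aeval (coordFun I) (quotientMap i))).toSubalgebra =
      σ.toAlgHom.equalizer (AlgHom.id ℂ _) :=
    Subalgebra.ext fun y ↦ (hσ.apply_eq_self_iff_mem_adjoin hF hx).symm
  exact ⟨e.trans (Subalgebra.equivOfEq _ _ hfixed), he⟩

end IsDiagonalAction

end DiagonalAction

theorem stmt3_general (a b c : ℂ) (ha0 : a ≠ 0) (ha1 : a ≠ 1) :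
    ∃ σ : FractionRing (HSurf2 (pS5 a b c) pF₁5) ≃ₐ[ℂ] FractionRing (HSurf2 (pS5 a b c) pF₁5),
      orderOf σ = 3 ∧
      σ (cls2 (pS5 a b c) pF₁5 (X 0)) = (ω ^ 2 : ℂ) • cls2 (pS5 a b c) pF₁5 (X 0) ∧
      σ (cls2 (pS5 a b c) pF₁5 (X 4)) = (ω : ℂ) • cls2 (pS5 a b c) pF₁5 (X 4) ∧
      σ (cls2 (pS5 a b c) pF₁5 (X 1)) = cls2 (pS5 a b c) pF₁5 (X 1) ∧
      σ (cls2 (pS5 a b c) pF₁5 (X 2)) = cls2 (pS5 a b c) pF₁5 (X 2) ∧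
      σ (cls2 (pS5 a b c) pF₁5 (X 3)) = cls2 (pS5 a b c) pF₁5 (X 3) ∧
      ∃ ψ : FractionRing (HSurf (pY a b c)) ≃ₐ[ℂ]
          (AlgHom.equalizer σ.toAlgHom (AlgHom.id ℂ (FractionRing (HSurf2 (pS5 a b c) pF₁5)))),
        (↑(ψ (cls (pY a b c) (X 3))) : FractionRing (HSurf2 (pS5 a b c) pF₁5))
          = cls2 (pS5 a b c) pF₁5 (X 0 * X 4) ∧
        (↑(ψ (cls (pY a b c) (X 0))) : FractionRing (HSurf2 (pS5 a b c) pF₁5))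
          = cls2 (pS5 a b c) pF₁5 (X 3) ∧
        (↑(ψ (cls (pY a b c) (X 1))) : FractionRing (HSurf2 (pS5 a b c) pF₁5))
          = cls2 (pS5 a b c) pF₁5 (X 1) ∧
        (↑(ψ (cls (pY a b c) (X 2))) : FractionRing (HSurf2 (pS5 a b c) pF₁5))
          = cls2 (pS5 a b c) pF₁5 (X 2) := by
  have := isPrime_span_pS5_pF₁5 (b := b) (c := c) ha0 ha1
  have hx := coordFun_four_ne_zero a b c
  have hF : pF₁5 ∈ Ideal.span {pS5 a b c, pF₁5} := Ideal.subset_span (Set.mem_insert_of_mem _ rfl)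
  have hJ := comap_bind₁_quotientMap (b := b) (c := c) ha0 ha1
  obtain ⟨σ, hσ⟩ := exists_isDiagonalAction a b c
  obtain ⟨ψ, hψ⟩ := hσ.exists_algEquiv_equalizer hF hx hJ
  have hσX (i : Fin 5) : σ (cls2 (pS5 a b c) pF₁5 (X i)) =
      (diagonalWeight i : ℂ) • cls2 (pS5 a b c) pF₁5 (X i) := hσ i
  have hψX (i : Fin 4) : (ψ (cls (pY a b c) (X i)) : FractionRing (HSurf2 (pS5 a b c) pF₁5)) =
      cls2 (pS5 a b c) pF₁5 (quotientMap i) := (hψ i).trans (aeval_coordFun _ _)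
  exact ⟨σ, hσ.orderOf_eq_three hx, hσX 0, hσX 4, (hσX 1).trans (one_smul _ _),
    (hσX 2).trans (one_smul _ _), (hσX 3).trans (one_smul _ _), ψ, hψX 3, hψX 0, hψX 1, hψX 2⟩

/-- Let `a, b, c ∈ ℂ ∖ {0,1}` be pairwise distinct, let
`K = Frac(ℂ[w,u,v,t₁,x]/(w³u₁v₁(v₁−u₁) − uv, x³ − t₁(t₁+1)))` be the function field of
`S × F₁`, and let `σ` be the `ℂ`-algebra automorphism of `K` of order 3 determined by
`σ(w) = ω²·w`, `σ(x) = ω·x`, `σ(u) = u`, `σ(v) = v`, `σ(t₁) = t₁` (the diagonal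
`G = ℤ/3ℤ` action).  Then the fixed field `K^σ` is isomorphic as a `ℂ`-algebra to the
function field of `Y`, an isomorphism `ψ` being induced by `y₁ ↦ w·x` (and `t₁ ↦ t₁`,
`u ↦ u`, `v ↦ v`): i.e. `Y` is birationally equivalent to `(S × F₁)/G`. -/
theorem stmt3 (a b c : ℂ) (ha0 : a ≠ 0) (ha1 : a ≠ 1) (hb0 : b ≠ 0) (hb1 : b ≠ 1)
    (hc0 : c ≠ 0) (hc1 : c ≠ 1) (hab : a ≠ b) (hac : a ≠ c) (hbc : b ≠ c) :
    ∃ σ : FractionRing (HSurf2 (pS5 a b c) pF₁5) ≃ₐ[ℂ] FractionRing (HSurf2 (pS5 a b c) pF₁5),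
      orderOf σ = 3 ∧
      σ (cls2 (pS5 a b c) pF₁5 (X 0)) = (ω ^ 2 : ℂ) • cls2 (pS5 a b c) pF₁5 (X 0) ∧
      σ (cls2 (pS5 a b c) pF₁5 (X 4)) = (ω : ℂ) • cls2 (pS5 a b c) pF₁5 (X 4) ∧
      σ (cls2 (pS5 a b c) pF₁5 (X 1)) = cls2 (pS5 a b c) pF₁5 (X 1) ∧
      σ (cls2 (pS5 a b c) pF₁5 (X 2)) = cls2 (pS5 a b c) pF₁5 (X 2) ∧
      σ (cls2 (pS5 a b c) pF₁5 (X 3)) = cls2 (pS5 a b c) pF₁5 (X 3) ∧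
      ∃ ψ : FractionRing (HSurf (pY a b c)) ≃ₐ[ℂ]
          (AlgHom.equalizer σ.toAlgHom (AlgHom.id ℂ (FractionRing (HSurf2 (pS5 a b c) pF₁5)))),
        (↑(ψ (cls (pY a b c) (X 3))) : FractionRing (HSurf2 (pS5 a b c) pF₁5))
          = cls2 (pS5 a b c) pF₁5 (X 0 * X 4) ∧
        (↑(ψ (cls (pY a b c) (X 0))) : FractionRing (HSurf2 (pS5 a b c) pF₁5))
          = cls2 (pS5 a b c) pF₁5 (X 3) ∧
        (↑(ψ (cls (pY a b c) (X 1))) : FractionRing (HSurf2 (pS5 a b c) pF₁5))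
          = cls2 (pS5 a b c) pF₁5 (X 1) ∧
        (↑(ψ (cls (pY a b c) (X 2))) : FractionRing (HSurf2 (pS5 a b c) pF₁5))
          = cls2 (pS5 a b c) pF₁5 (X 2) :=
  stmt3_general a b c ha0 ha1
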